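/- arXiv:1402.6957 — 2 statements merged into one kernel-verified Lean document; each statement's English description precedes it below -/
import Mathlib

section
/- Let R be a ring and let {U_i : i ∈ I} and {V_j : j ∈ J} be two families of biuniform right R-modules. If there exist bijections σ, τ : I → J such that U_i and V_{σ(i)} belong to the same monogeny class and U_i and V_{τ(i)} belong to the same epigeny class for every i ∈ I, then the direct products ∏_{i∈I} U_i and ∏_{j∈J} V_j are isomorphic right R-modules. -/
/-- Two modules belong to the same monogeny class if there are injective homomorphisms
in both directions. -/
def SameMonogenyClass (R : Type*) [Ring R] (M N : Type*) [AddCommGroup M] [Module R M]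
    [AddCommGroup N] [Module R N] : Prop :=
  (∃ f : M →ₗ[R] N, Function.Injective f) ∧ ∃ g : N →ₗ[R] M, Function.Injective g

/-- Two modules belong to the same epigeny class if there are surjective homomorphisms
in both directions. -/
def SameEpigenyClass (R : Type*) [Ring R] (M N : Type*) [AddCommGroup M] [Module R M]
    [AddCommGroup N] [Module R N] : Prop :=
  (∃ f : M →ₗ[R] N, Function.Surjective f) ∧ ∃ g : N →ₗ[R] M, Function.Surjective g

/-- A module is uniform if it is nonzero and any two nonzero submodules intersect
nontrivially. -/
def IsUniformModule (R : Type*) [Ring R] (M : Type*) [AddCommGroup M] [Module R M] : Prop :=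
  (∃ x : M, x ≠ 0) ∧ ∀ N P : Submodule R M, N ≠ ⊥ → P ≠ ⊥ → N ⊓ P ≠ ⊥

/-- A module is couniform (hollow) if it is nonzero and the sum of any two proper
submodules is proper. -/
def IsCouniformModule (R : Type*) [Ring R] (M : Type*) [AddCommGroup M] [Module R M] : Prop :=
  (∃ x : M, x ≠ 0) ∧ ∀ N P : Submodule R M, N ≠ ⊤ → P ≠ ⊤ → N ⊔ P ≠ ⊤

/-- A module is biuniform if it is both uniform and couniform. -/
def IsBiuniformModule (R : Type*) [Ring R] (M : Type*) [AddCommGroup M] [Module R M] : Prop :=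
  IsUniformModule R M ∧ IsCouniformModule R M

/-!
Write `[M]_m` and `[M]_e` for the monogeny and epigeny classes of `M`. A biuniform module `A` with
`[A]_m = [B]_m` and `[A]_e = [C]_e` is a direct summand of `B × C`, with a complement `D` such that
`[D]_m = [C]_m` and `[D]_e = [B]_e`; moreover a biuniform module is determined up to isomorphism by
its two classes. This settles the case in which, after reindexing along `σ`, the permutation `π`
that matches the epigeny classes is an involution: the product splits into blocks with at most two
factors.

In general `π` is a composite of two involutions, each of which preserves every cycle of `π`.
Iterating the complement construction along a cycle yields, for all `i` and `j` in that cycle, a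
module in the monogeny class of `V i` and the epigeny class of `V j`. Hence there is an
intermediate family related to each of the two given families by an involution.
-/

universe u v

section Classes

variable {R : Type*} [Ring R] {M N P : Type*} [AddCommGroup M] [Module R M] [AddCommGroup N]
  [Module R N] [AddCommGroup P] [Module R P]

namespace SameMonogenyClass

theorem symm (h : SameMonogenyClass R M N) : SameMonogenyClass R N M := ⟨h.2, h.1⟩

theorem trans (hMN : SameMonogenyClass R M N) (hNP : SameMonogenyClass R N P) :
    SameMonogenyClass R M P := by
  obtain ⟨⟨f, hf⟩, f', hf'⟩ := hMN
  obtain ⟨⟨g, hg⟩, g', hg'⟩ := hNP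
  exact ⟨⟨g ∘ₗ f, hg.comp hf⟩, f' ∘ₗ g', hf'.comp hg'⟩

theorem of_linearEquiv (e : M ≃ₗ[R] N) : SameMonogenyClass R M N :=
  ⟨⟨e, e.injective⟩, e.symm, e.symm.injective⟩

theorem isUniformModule (h : SameMonogenyClass R M N) (hM : IsUniformModule R M) :
    IsUniformModule R N := by
  obtain ⟨⟨f, hf⟩, g, hg⟩ := h
  obtain ⟨⟨x, hx⟩, hM⟩ := hM
  have map_ne_bot {K : Submodule R N} (hK : K ≠ ⊥) : K.map g ≠ ⊥ := fun h =>
    hK (Submodule.map_injective_of_injective hg (h.trans (Submodule.map_bot g).symm))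
  refine ⟨⟨f x, (map_ne_zero_iff f hf).2 hx⟩, fun K L hK hL hKL => ?_⟩
  apply hM _ _ (map_ne_bot hK) (map_ne_bot hL)
  rw [← Submodule.map_inf g hg, hKL, Submodule.map_bot]

end SameMonogenyClass

namespace SameEpigenyClass

theorem symm (h : SameEpigenyClass R M N) : SameEpigenyClass R N M := ⟨h.2, h.1⟩

theorem trans (hMN : SameEpigenyClass R M N) (hNP : SameEpigenyClass R N P) :
    SameEpigenyClass R M P := by
  obtain ⟨⟨f, hf⟩, f', hf'⟩ := hMN
  obtain ⟨⟨g, hg⟩, g', hg'⟩ := hNP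
  exact ⟨⟨g ∘ₗ f, hg.comp hf⟩, f' ∘ₗ g', hf'.comp hg'⟩

theorem of_linearEquiv (e : M ≃ₗ[R] N) : SameEpigenyClass R M N :=
  ⟨⟨e, e.surjective⟩, e.symm, e.symm.surjective⟩

theorem isCouniformModule (h : SameEpigenyClass R M N) (hM : IsCouniformModule R M) :
    IsCouniformModule R N := by
  obtain ⟨⟨f, hf⟩, g, hg⟩ := h
  obtain ⟨⟨x, hx⟩, hM⟩ := hM
  obtain ⟨y, rfl⟩ := hg x
  have comap_ne_top {K : Submodule R N} (hK : K ≠ ⊤) : K.comap f ≠ ⊤ := fun h =>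
    hK (Submodule.comap_injective_of_surjective hf (h.trans (Submodule.comap_top f).symm))
  refine ⟨⟨y, ne_zero_of_map hx⟩, fun K L hK hL hKL => ?_⟩
  apply hM _ _ (comap_ne_top hK) (comap_ne_top hL)
  have ker_le : f.ker ≤ K.comap f ⊔ L.comap f := f.ker_le_comap.trans le_sup_left
  rw [← Submodule.comap_map_eq_self ker_le, Submodule.map_sup_comap_of_surjective hf, hKL,
    Submodule.comap_top]

end SameEpigenyClass

theorem IsUniformModule.injective_add (hM : IsUniformModule R M) {f g : M →ₗ[R] N}
    (hf : Function.Injective f) (hg : ¬Function.Injective g) : Function.Injective (f + g) := by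
  rw [← LinearMap.ker_eq_bot]
  by_contra hfg
  refine hM.2 _ _ hfg (mt LinearMap.ker_eq_bot.1 hg) ((Submodule.eq_bot_iff _).2 ?_)
  rintro x ⟨hx_add : f x + g x = 0, hx : g x = 0⟩
  rw [hx, add_zero] at hx_add
  exact (map_eq_zero_iff f hf).1 hx_add

theorem IsCouniformModule.surjective_add (hN : IsCouniformModule R N) {f g : M →ₗ[R] N}
    (hf : ¬Function.Surjective f) (hg : Function.Surjective g) : Function.Surjective (f + g) := by
  rw [← LinearMap.range_eq_top]
  by_contra hfg
  refine hN.2 _ _ hfg (mt LinearMap.range_eq_top.1 hf) (Submodule.eq_top_iff'.2 fun y => ?_)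
  obtain ⟨x, rfl⟩ := hg y
  exact Submodule.mem_sup.2 ⟨(f + g) x, ⟨x, rfl⟩, f (-x), ⟨-x, rfl⟩, by simp⟩

theorem nonempty_linearEquiv_of_injective_of_surjective (hM : IsUniformModule R M)
    (hN : IsCouniformModule R N) {f g : M →ₗ[R] N} (hf : Function.Injective f)
    (hg : Function.Surjective g) : Nonempty (M ≃ₗ[R] N) := by
  by_cases hf_surj : Function.Surjective f
  · exact ⟨.ofBijective f ⟨hf, hf_surj⟩⟩
  by_cases hg_inj : Function.Injective g
  · exact ⟨.ofBijective g ⟨hg_inj, hg⟩⟩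
  exact ⟨.ofBijective (f + g) ⟨hM.injective_add hf hg_inj, hN.surjective_add hf_surj hg⟩⟩

theorem IsBiuniformModule.nonempty_linearEquiv (hM : IsBiuniformModule R M)
    (hm : SameMonogenyClass R M N) (he : SameEpigenyClass R M N) : Nonempty (M ≃ₗ[R] N) := by
  obtain ⟨f, hf⟩ := hm.1
  obtain ⟨g, hg⟩ := he.1
  exact nonempty_linearEquiv_of_injective_of_surjective hM.1 (he.isCouniformModule hM.2) hf hg

end Classes

section Complement

variable {R : Type*} [Ring R] {A B C D : Type*} [AddCommGroup A] [Module R A] [AddCommGroup B]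
  [Module R B] [AddCommGroup C] [Module R C] [AddCommGroup D] [Module R D]

theorem nonempty_prod_ker_linearEquiv {ι : A →ₗ[R] B} {q : B →ₗ[R] A}
    (hqι : q ∘ₗ ι = LinearMap.id) : Nonempty ((A × q.ker) ≃ₗ[R] B) := by
  have e := (q.exact_subtype_ker_map.splitSurjectiveEquiv q.ker.injective_subtype ⟨ι, hqι⟩).1
  exact ⟨LinearEquiv.prodComm R A q.ker ≪≫ₗ e.symm⟩

section KerCoprod

variable {f : A →ₗ[R] B} {g : B →ₗ[R] A} {h : A →ₗ[R] C} {k : C →ₗ[R] A}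

/-- The projection of `B × C` onto the kernel of `(g, k) : B × C → A` along the image of a
section `(f, h)`. Its restrictions to the two factors are the maps from `C` and `B` to this kernel
in the comparison of classes. -/
def kerCoprodProjection (hid : g ∘ₗ f + k ∘ₗ h = LinearMap.id) :
    B × C →ₗ[R] (g.coprod k).ker :=
  (LinearMap.id - f.prod h ∘ₗ g.coprod k).codRestrict _ fun x => by
    have hid_apply : (g.coprod k) (f.prod h (g.coprod k x)) = g.coprod k x :=
      LinearMap.congr_fun hid _
    simp only [LinearMap.sub_apply, LinearMap.id_apply, LinearMap.comp_apply, LinearMap.mem_ker,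
      map_sub, hid_apply, sub_self]

theorem sameMonogenyClass_ker_coprod (hf : Function.Injective f) (hg : Function.Injective g)
    (hid : g ∘ₗ f + k ∘ₗ h = LinearMap.id) : SameMonogenyClass R (g.coprod k).ker C := by
  refine ⟨⟨LinearMap.snd R B C ∘ₗ (g.coprod k).ker.subtype, (injective_iff_map_eq_zero _).2 ?_⟩,
    kerCoprodProjection hid ∘ₗ LinearMap.inr R B C, (injective_iff_map_eq_zero _).2 ?_⟩
  · rintro ⟨⟨b, c⟩, hbc : g b + k c = 0⟩ (rfl : c = 0)
    rw [map_zero, add_zero, map_eq_zero_iff g hg] at hbc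
    simp [hbc]
  · intro c hc
    obtain ⟨hfk, hhk⟩ : f (k c) = 0 ∧ c - h (k c) = 0 := by
      simpa [kerCoprodProjection, Subtype.ext_iff, Prod.ext_iff] using hc
    rw [map_eq_zero_iff f hf] at hfk
    rwa [hfk, map_zero, sub_zero] at hhk

theorem sameEpigenyClass_ker_coprod (hh : Function.Surjective h) (hk : Function.Surjective k)
    (hid : g ∘ₗ f + k ∘ₗ h = LinearMap.id) : SameEpigenyClass R (g.coprod k).ker B := by
  refine ⟨⟨LinearMap.fst R B C ∘ₗ (g.coprod k).ker.subtype, fun b => ?_⟩,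
    kerCoprodProjection hid ∘ₗ LinearMap.inl R B C, ?_⟩
  · obtain ⟨c, hc⟩ := hk (-g b)
    exact ⟨⟨(b, c), by simp [hc]⟩, rfl⟩
  · rintro ⟨⟨b, c⟩, hbc : g b + k c = 0⟩
    obtain ⟨a, rfl⟩ := hh c
    have hga : g (b - f a) = -a := by
      have hid_a : g (f a) + k (h a) = a := LinearMap.congr_fun hid a
      rw [map_sub, eq_neg_of_add_eq_zero_left hbc, ← neg_add', add_comm, hid_a]
    exact ⟨b - f a, by simp [-map_sub, kerCoprodProjection, Subtype.ext_iff, hga]⟩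

end KerCoprod

theorem exists_complement_of_not_surjective_of_not_injective (hA : IsBiuniformModule R A)
    {f : A →ₗ[R] B} {g : B →ₗ[R] A} {h : A →ₗ[R] C} {k : C →ₗ[R] A}
    (hf : Function.Injective f) (hg : Function.Injective g)
    (hh : Function.Surjective h) (hk : Function.Surjective k)
    (hgf : ¬Function.Surjective (g ∘ₗ f)) (hkh : ¬Function.Injective (k ∘ₗ h)) :
    ∃ D : Submodule R (B × C), SameMonogenyClass R D C ∧ SameEpigenyClass R D B ∧
      Nonempty ((A × D) ≃ₗ[R] (B × C)) := by
  let θ : A ≃ₗ[R] A := .ofBijective (g ∘ₗ f + k ∘ₗ h)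
    ⟨hA.1.injective_add (hg.comp hf) hkh, hA.2.surjective_add hgf (hk.comp hh)⟩
  let f' : A →ₗ[R] B := f ∘ₗ θ.symm
  let h' : A →ₗ[R] C := h ∘ₗ θ.symm
  have hf' : Function.Injective f' := hf.comp θ.symm.injective
  have hh' : Function.Surjective h' := hh.comp θ.symm.surjective
  have hid : g ∘ₗ f' + k ∘ₗ h' = LinearMap.id := LinearMap.ext θ.apply_symm_apply
  have hsection : g.coprod k ∘ₗ f'.prod h' = LinearMap.id := by
    rw [LinearMap.coprod_comp_prod, hid]
  exact ⟨_, sameMonogenyClass_ker_coprod hf' hg hid, sameEpigenyClass_ker_coprod hh' hk hid,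
    nonempty_prod_ker_linearEquiv hsection⟩

theorem IsBiuniformModule.exists_complement (hA : IsBiuniformModule R A)
    (hm : SameMonogenyClass R A B) (he : SameEpigenyClass R A C) :
    ∃ D : Submodule R (B × C), SameMonogenyClass R D C ∧ SameEpigenyClass R D B ∧
      Nonempty ((A × D) ≃ₗ[R] (B × C)) := by
  obtain ⟨f, hf⟩ := hm.1
  obtain ⟨g, hg⟩ := hm.2
  obtain ⟨h, hh⟩ := he.1
  obtain ⟨k, hk⟩ := he.2
  by_cases hgf : Function.Surjective (g ∘ₗ f)
  · have eAB : A ≃ₗ[R] B := (LinearEquiv.ofBijective g ⟨hg, .of_comp hgf⟩).symm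
    have eC : Submodule.snd R B C ≃ₗ[R] C := Submodule.sndEquiv R B C
    exact ⟨_, .of_linearEquiv eC,
      (SameEpigenyClass.of_linearEquiv eC).trans (he.symm.trans (.of_linearEquiv eAB)),
      ⟨eAB.prodCongr eC⟩⟩
  by_cases hkh : Function.Injective (k ∘ₗ h)
  · have eAC : A ≃ₗ[R] C := .ofBijective h ⟨.of_comp (f := k) hkh, hh⟩
    have eB : Submodule.fst R B C ≃ₗ[R] B := Submodule.fstEquiv R B C
    exact ⟨_, (SameMonogenyClass.of_linearEquiv eB).trans (hm.symm.trans (.of_linearEquiv eAC)),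
      .of_linearEquiv eB, ⟨LinearEquiv.prodComm R A _ ≪≫ₗ eB.prodCongr eAC⟩⟩
  exact exists_complement_of_not_surjective_of_not_injective hA hf hg hh hk hgf hkh

theorem nonempty_prod_linearEquiv_of_classes_swap (hA : IsBiuniformModule R A)
    (hD : IsBiuniformModule R D) (hAB : SameMonogenyClass R A B) (hDC : SameMonogenyClass R D C)
    (hAC : SameEpigenyClass R A C) (hDB : SameEpigenyClass R D B) :
    Nonempty ((A × D) ≃ₗ[R] (B × C)) := by
  obtain ⟨D', hm, he, ⟨e⟩⟩ := hA.exists_complement hAB hAC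
  obtain ⟨eD⟩ := hD.nonempty_linearEquiv (hDC.trans hm.symm) (hDB.trans he.symm)
  exact ⟨(LinearEquiv.refl R A).prodCongr eD ≪≫ₗ e⟩

end Complement

section Pi

variable {R : Type*} [Ring R] {ι : Type*} {X : ι → Type*} {Y : ι → Type*}
  [∀ i, AddCommGroup (X i)] [∀ i, Module R (X i)] [∀ i, AddCommGroup (Y i)] [∀ i, Module R (Y i)]

variable (R X) in
theorem nonempty_pi_linearEquiv_prod {i j : ι} (hij : i ≠ j) (h : ∀ k, k = i ∨ k = j) :
    Nonempty ((∀ k, X k) ≃ₗ[R] (X i × X j)) := by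
  classical
  refine ⟨.ofBijective
    ((LinearMap.proj i : (∀ k, X k) →ₗ[R] X i).prod (LinearMap.proj j)) ⟨fun x y hxy => ?_, ?_⟩⟩
  · obtain ⟨hi, hj⟩ := Prod.ext_iff.1 hxy
    funext k
    obtain rfl | rfl := h k
    exacts [hi, hj]
  · rintro ⟨a, b⟩
    refine ⟨Function.update (Function.update 0 i a) j b, ?_⟩
    ext <;> simp [hij]

theorem nonempty_pi_linearEquiv_of_fibers {κ : Type*} (p : ι → κ)
    (h : ∀ q, Nonempty ((∀ i : {i // p i = q}, X i) ≃ₗ[R] ∀ i : {i // p i = q}, Y i)) :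
    Nonempty ((∀ i, X i) ≃ₗ[R] ∀ i, Y i) := by
  have e := fun q => Classical.choice (h q)
  let φ := Equiv.sigmaFiberEquiv p
  let eX := (LinearEquiv.piCongrLeft R X φ).symm ≪≫ₗ .piCurry R fun q i => X (φ ⟨q, i⟩)
  let eY := (LinearEquiv.piCongrLeft R Y φ).symm ≪≫ₗ .piCurry R fun q i => Y (φ ⟨q, i⟩)
  exact ⟨eX ≪≫ₗ .piCongrRight e ≪≫ₗ eY.symm⟩

theorem nonempty_pi_linearEquiv_of_involutive (hX : ∀ i, IsBiuniformModule R (X i))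
    {c : ι → ι} (hc : Function.Involutive c) (hm : ∀ i, SameMonogenyClass R (X i) (Y i))
    (he : ∀ i, SameEpigenyClass R (X i) (Y (c i))) : Nonempty ((∀ i, X i) ≃ₗ[R] ∀ i, Y i) := by
  refine nonempty_pi_linearEquiv_of_fibers (fun i => s(i, c i)) fun q => ?_
  obtain hq | ⟨i, rfl⟩ := isEmpty_or_nonempty {i // s(i, c i) = q}
  · exact ⟨0⟩
  have hfiber (k : {k // s(k, c k) = s(i, c i)}) : k.1 = i ∨ k.1 = c i :=
    (Sym2.eq_iff.1 k.2).imp And.left And.left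
  have he_of_eq {j k : ι} (hjk : c j = k) : SameEpigenyClass R (X j) (Y k) := hjk ▸ he j
  by_cases hi : c i = i
  · have hfixed (k : {k // s(k, c k) = s(i, c i)}) : c k = k := by
      obtain hk | hk := hfiber k <;> simp only [hk, hi]
    exact ⟨.piCongrRight fun k =>
      Classical.choice ((hX k).nonempty_linearEquiv (hm k) (he_of_eq (hfixed k)))⟩
  · let i₁ : {k // s(k, c k) = s(i, c i)} := ⟨i, rfl⟩
    let i₂ : {k // s(k, c k) = s(i, c i)} := ⟨c i, by rw [hc i, Sym2.eq_swap]⟩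
    have hne : i₁ ≠ i₂ := fun h => hi (congrArg Subtype.val h).symm
    have hall (k) : k = i₁ ∨ k = i₂ := (hfiber k).imp Subtype.ext Subtype.ext
    obtain ⟨eX⟩ := nonempty_pi_linearEquiv_prod R (fun k : {k // _ = _} => X k) hne hall
    obtain ⟨eY⟩ := nonempty_pi_linearEquiv_prod R (fun k : {k // _ = _} => Y k) hne hall
    obtain ⟨e⟩ := nonempty_prod_linearEquiv_of_classes_swap (hX i) (hX (c i)) (hm i) (hm (c i))
      (he i) (he_of_eq (hc i))
    exact ⟨eX ≪≫ₗ e ≪≫ₗ eY.symm⟩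

end Pi

section Perm

variable {α : Type*} {π : Equiv.Perm α}

theorem iff_of_sameCycle_of_forall_iff_apply {P : α → Prop} (hP : ∀ i, P i ↔ P (π i)) {i j : α}
    (hij : π.SameCycle i j) : P i ↔ P j := by
  obtain ⟨n, rfl⟩ := hij
  induction n using Int.induction_on with
  | zero => rfl
  | succ n ih => rw [ih, hP, ← Equiv.Perm.mul_apply, ← zpow_one_add, add_comm]
  | pred n ih =>
    rw [ih, hP ((π ^ (-n - 1 : ℤ)) i), ← Equiv.Perm.mul_apply, ← zpow_one_add, add_sub_cancel]

theorem zpow_neg_apply_eq_of_zpow_apply_eq {m n : ℤ} {x : α} (h : (π ^ m) x = (π ^ n) x) :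
    (π ^ (-m)) x = (π ^ (-n)) x := by
  have := congrArg (π ^ (-m - n)) h
  simp only [← Equiv.Perm.mul_apply, ← zpow_add] at this
  convert this.symm using 3 <;> ring

variable (π) in
theorem exists_involutive_involutive_comp_sameCycle :
    ∃ a : α → α, Function.Involutive a ∧ Function.Involutive (a ∘ π) ∧
      ∀ i, π.SameCycle i (a i) := by
  -- On the cycle of a chosen representative `r`, the involution is `π ^ n r ↦ π ^ (-n) r`.
  obtain ⟨r, hr, hr_eq⟩ : ∃ r : α → α, (∀ i, π.SameCycle (r i) i) ∧
      ∀ i j, π.SameCycle i j → r i = r j :=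
    let s := Equiv.Perm.SameCycle.setoid π
    ⟨fun i => (Quotient.mk s i).out, fun i => Quotient.mk_out (s := s) i,
      fun _ _ h => congrArg Quotient.out (Quotient.sound (s := s) h)⟩
  choose n hn using hr
  let a : α → α := fun i => (π ^ (-n i)) (r i)
  have ha (m : ℤ) (i : α) : a ((π ^ m) (r i)) = (π ^ (-m)) (r i) := by
    have hri : r ((π ^ m) (r i)) = r i :=
      hr_eq _ _ (Equiv.Perm.SameCycle.trans ⟨-m, by simp⟩ ⟨n i, hn i⟩)
    have := hn ((π ^ m) (r i))
    simp only [a, hri] at this ⊢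
    exact zpow_neg_apply_eq_of_zpow_apply_eq this
  refine ⟨a, fun i => ?_, fun i => ?_, fun i => ?_⟩
  · change a ((π ^ (-n i)) (r i)) = i
    rw [ha, neg_neg, hn]
  · have haπ (m : ℤ) : a (π ((π ^ m) (r i))) = (π ^ (-(1 + m))) (r i) := by
      rw [← Equiv.Perm.mul_apply, ← zpow_one_add, ha]
    calc a (π (a (π i))) = a (π (a (π ((π ^ n i) (r i))))) := by rw [hn]
      _ = (π ^ (-(1 + -(1 + n i)))) (r i) := by rw [haπ, haπ]
      _ = (π ^ n i) (r i) := by ring_nf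
      _ = i := hn i
  · exact Equiv.Perm.SameCycle.trans (Equiv.Perm.SameCycle.symm ⟨n i, hn i⟩) ⟨-n i, rfl⟩

end Perm

section Cycle

/-- The monogeny class of `M` meets the epigeny class of `N`: some module belongs to both. Such
modules form the intermediate family of the proof; their universe `w` is a parameter because the
complements constructed from `U i` and `V j` live in the maximum of two universes. -/
def MonogenyMeetsEpigeny.{w} (R : Type*) [Ring R] (M N : Type*) [AddCommGroup M] [Module R M]
    [AddCommGroup N] [Module R N] : Prop :=
  ∃ (W : Type w) (_ : AddCommGroup W) (_ : Module R W),
    SameMonogenyClass R W M ∧ SameEpigenyClass R W N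

namespace MonogenyMeetsEpigeny

variable {R : Type*} [Ring R] {M N : Type*} [AddCommGroup M] [Module R M] [AddCommGroup N]
  [Module R N]

theorem congr_right {P : Type*} [AddCommGroup P] [Module R P] (h : SameEpigenyClass R N P) :
    MonogenyMeetsEpigeny.{u} R M N ↔ MonogenyMeetsEpigeny.{u} R M P :=
  ⟨fun ⟨W, _, _, hm, he⟩ => ⟨W, _, _, hm, he.trans h⟩,
    fun ⟨W, _, _, hm, he⟩ => ⟨W, _, _, hm, he.trans h.symm⟩⟩

theorem of_sameMonogenyClass {P : Type v} [AddCommGroup P] [Module R P]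
    (hN : IsBiuniformModule R N) (hNP : SameMonogenyClass R N P)
    (h : MonogenyMeetsEpigeny.{max u v} R M N) : MonogenyMeetsEpigeny.{max u v} R M P := by
  obtain ⟨W, _, _, hm, he⟩ := h
  obtain ⟨D, hDm, hDe, -⟩ := hN.exists_complement hNP he.symm
  exact ⟨D, inferInstance, inferInstance, hDm.trans hm, hDe⟩

end MonogenyMeetsEpigeny

variable {R : Type*} [Ring R] {I : Type*} {U : I → Type u} {V : I → Type v}
  [∀ i, AddCommGroup (U i)] [∀ i, Module R (U i)] [∀ i, AddCommGroup (V i)] [∀ i, Module R (V i)]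

theorem monogenyMeetsEpigeny_of_sameCycle (hU : ∀ i, IsBiuniformModule R (U i))
    (hV : ∀ i, IsBiuniformModule R (V i)) {π : Equiv.Perm I}
    (hm : ∀ i, SameMonogenyClass R (U i) (V i))
    (he : ∀ i, SameEpigenyClass R (U i) (V (π i))) {i j : I} (hij : π.SameCycle i j) :
    MonogenyMeetsEpigeny.{max u v} R (V i) (V j) := by
  refine (iff_of_sameCycle_of_forall_iff_apply
    (P := fun j => MonogenyMeetsEpigeny.{max u v} R (V i) (V j)) (fun j => ?_) hij).1 ?_
  · rw [← MonogenyMeetsEpigeny.congr_right (he j)]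
    exact ⟨.of_sameMonogenyClass (hV j) (hm j).symm, .of_sameMonogenyClass (hU j) (hm j)⟩
  · have e : ULift.{u} (V i) ≃ₗ[R] V i := ULift.moduleEquiv
    exact ⟨ULift.{u} (V i), inferInstance, inferInstance, .of_linearEquiv e, .of_linearEquiv e⟩

theorem nonempty_pi_linearEquiv_of_perm (hU : ∀ i, IsBiuniformModule R (U i))
    (hV : ∀ i, IsBiuniformModule R (V i)) (π : Equiv.Perm I)
    (hm : ∀ i, SameMonogenyClass R (U i) (V i))
    (he : ∀ i, SameEpigenyClass R (U i) (V (π i))) :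
    Nonempty ((∀ i, U i) ≃ₗ[R] ∀ i, V i) := by
  obtain ⟨a, ha, haπ, hcycle⟩ := exists_involutive_involutive_comp_sameCycle π
  choose W _ _ hWm hWe using fun i => monogenyMeetsEpigeny_of_sameCycle hU hV hm he (hcycle i)
  have hW (i) : IsBiuniformModule R (W i) :=
    ⟨(hWm i).symm.isUniformModule (hV i).1, (hWe i).symm.isCouniformModule (hV (a i)).2⟩
  have hUWe (i) : SameEpigenyClass R (U i) (W (a (π i))) :=
    (he i).trans (ha (π i) ▸ hWe (a (π i))).symm
  obtain ⟨eUW⟩ := nonempty_pi_linearEquiv_of_involutive hU haπ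
    (fun i => (hm i).trans (hWm i).symm) hUWe
  obtain ⟨eWV⟩ := nonempty_pi_linearEquiv_of_involutive hW ha hWm hWe
  exact ⟨eUW ≪≫ₗ eWV⟩

end Cycle

/-- If two families of biuniform modules have their monogeny classes and epigeny classes
matched by bijections, then their direct products are isomorphic. -/
theorem direct_products_of_biuniform_isomorphic
    {R : Type*} [Ring R] {I J : Type*}
    (U : I → Type*) (V : J → Type*)
    [∀ i, AddCommGroup (U i)] [∀ i, Module R (U i)]
    [∀ j, AddCommGroup (V j)] [∀ j, Module R (V j)]
    (hU : ∀ i, IsBiuniformModule R (U i)) (hV : ∀ j, IsBiuniformModule R (V j))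
    (σ τ : I ≃ J)
    (hm : ∀ i, SameMonogenyClass R (U i) (V (σ i)))
    (he : ∀ i, SameEpigenyClass R (U i) (V (τ i))) :
    Nonempty (((i : I) → U i) ≃ₗ[R] ((j : J) → V j)) := by
  have he' (i : I) : SameEpigenyClass R (U i) (V (σ (σ.symm (τ i)))) :=
    (σ.apply_symm_apply (τ i)).symm ▸ he i
  obtain ⟨e⟩ := nonempty_pi_linearEquiv_of_perm hU (fun i => hV (σ i)) (τ.trans σ.symm) hm he'
  exact ⟨e ≪≫ₗ LinearEquiv.piCongrLeft R V σ⟩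
end

section
/- Let R be a ring. For each i ∈ I let f_i : E_i → E'_i and for each j ∈ J let g_j : F_j → F'_j be non-injective R-module homomorphisms between indecomposable injective right R-modules, and set A_i = ker f_i, B_j = ker g_j. Suppose there exist bijections σ, τ : I → J such that: (1) A_i and B_{σ(i)} belong to the same monogeny class for every i ∈ I; and (2) A_i and B_{τ(i)} have the same upper part for every i ∈ I, i.e., there exist homomorphisms φ : E_i → F_{τ(i)} and ψ : F_{τ(i)} → E_i with φ^{-1}(B_{τ(i)}) = A_i and ψ^{-1}(A_i) = B_{τ(i)}. Then ∏_{i∈I} A_i ≅ ∏_{j∈J} B_j as right R-modules. -/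
/-- A module is indecomposable if it is nonzero and is not the internal direct sum of two
nonzero submodules. -/
def IsIndecomposableModule (R : Type*) [Ring R] (M : Type*) [AddCommGroup M] [Module R M] :
    Prop :=
  (∃ x : M, x ≠ 0) ∧
    ∀ N P : Submodule R M, N ⊓ P = ⊥ → N ⊔ P = ⊤ → N = ⊥ ∨ P = ⊥

/-!
A submodule `A` of an injective module `E` is regarded as the pair `(E, A)`. A morphism of pairs can
be injective on `E`, which defines the monogeny class of `A`, or injective modulo `A`, which defines
the upper part. If `E` is indecomposable and `A` is meet-irreducible, then for each of the two
conditions the morphisms failing it form a completely prime ideal, and the morphisms satisfying both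
are the isomorphisms. As for modules with at most two maximal ideals in their endomorphism rings,
this gives an isomorphism `X₁ ⊕ X₂ ≅ Y₁ ⊕ Y₂` whenever the classes of `X₁`, `X₂` agree with those of
`Y₁`, `Y₂`, up to a transposition for the upper parts.

Infinite families differ by a permutation `π = τ⁻¹ σ` of the upper parts, which is a product of two
involutions preserving the cycles of `π`. Pullbacks supply, for `i` and `j` in one cycle, a pair
with the monogeny class of `A i` and the upper part of `A j`; through these pairs the isomorphism is
composed of two isomorphisms, one for each involution, which are products of isomorphisms between
direct sums of at most two pairs.
-/

open CategoryTheory CategoryTheory.Limits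

namespace WeakKrullSchmidt

section Products

theorem zpow_neg_apply_eq_of_zpow_apply_eq {I : Type*} {π : Equiv.Perm I} {m n : ℤ} {i : I}
    (h : (π ^ m) i = (π ^ n) i) : (π ^ (-m)) i = (π ^ (-n)) i :=
  calc (π ^ (-m)) i = (π ^ (-m - n)) ((π ^ n) i) := by
        rw [← Equiv.Perm.mul_apply, ← zpow_add, sub_add_cancel]
    _ = (π ^ (-n)) i := by
        rw [← h, ← Equiv.Perm.mul_apply, ← zpow_add, sub_add_eq_add_sub, neg_add_cancel, zero_sub]

-- On each cycle of `π`, with base point `r`, the involution is `π ^ k r ↦ π ^ (-k) r`.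
theorem exists_involutive_comp_involutive {I : Type*} (π : Equiv.Perm I) :
    ∃ ρ : I → I, Function.Involutive ρ ∧ Function.Involutive (ρ ∘ π) ∧
      ∀ i, π.SameCycle i (ρ i) := by
  let rep (i : I) : I := (Quotient.mk (Equiv.Perm.SameCycle.setoid π) i).out
  have sameCycle_rep (i : I) : π.SameCycle (rep i) i :=
    Quotient.exact (s := Equiv.Perm.SameCycle.setoid π) (Quotient.out_eq _)
  have rep_eq {i j : I} (h : π.SameCycle i j) : rep i = rep j :=
    congrArg Quotient.out (Quotient.sound (s := Equiv.Perm.SameCycle.setoid π) h)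
  choose n hn using sameCycle_rep
  let ρ (i : I) : I := (π ^ (-n i)) (rep i)
  have ρ_zpow (k : ℤ) (i : I) : ρ ((π ^ k) (rep i)) = (π ^ (-k)) (rep i) := by
    have hrep : rep ((π ^ k) (rep i)) = rep i :=
      (rep_eq ⟨k, rfl⟩).symm.trans (rep_eq ⟨n i, hn i⟩)
    have h := hn ((π ^ k) (rep i))
    simp only [ρ, hrep] at h ⊢
    exact zpow_neg_apply_eq_of_zpow_apply_eq h
  refine ⟨ρ, fun i => ?_, fun i => ?_, fun i => ?_⟩
  · rw [ρ_zpow, neg_neg, hn]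
  · have π_zpow (k : ℤ) : π ((π ^ k) (rep i)) = (π ^ (1 + k)) (rep i) := by
      rw [zpow_one_add, Equiv.Perm.mul_apply]
    calc ρ (π (ρ (π i))) = ρ (π (ρ (π ((π ^ n i) (rep i))))) := by rw [hn]
      _ = (π ^ n i) (rep i) := by
        rw [π_zpow, ρ_zpow, π_zpow, ρ_zpow, neg_add, neg_neg, neg_add_cancel_left]
      _ = i := hn i
  · exact .trans (.symm ⟨n i, hn i⟩) ⟨-n i, rfl⟩

/-- The splitting of the index set `I` of an involution `ρ` into its fixed points, the points `i`
with `i < ρ i` and their images. -/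
noncomputable def involutionEquiv {I : Type*} [LinearOrder I] {ρ : I → I}
    (hρ : Function.Involutive ρ) : {i // ρ i = i} ⊕ ({i // i < ρ i} ⊕ {i // i < ρ i}) ≃ I :=
  .ofBijective (Sum.elim (fun i => i) (Sum.elim (fun i => i) fun i => ρ i)) <| by
    refine ⟨?_, fun i => ?_⟩
    · refine Subtype.val_injective.sumElim (Subtype.val_injective.sumElim
        (hρ.injective.comp Subtype.val_injective) fun i j hij => ?_) ?_
      · exact lt_asymm i.2 (by rw [hij, hρ]; exact j.2)
      · rintro ⟨i, hi⟩ (⟨j, hj⟩ | ⟨j, hj⟩) rfl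
        · exact hj.ne' hi
        · exact hj.ne ((hρ j).symm.trans hi)
    · rcases lt_trichotomy i (ρ i) with h | h | h
      · exact ⟨.inr (.inl ⟨i, h⟩), rfl⟩
      · exact ⟨.inl ⟨i, h.symm⟩, rfl⟩
      · exact ⟨.inr (.inr ⟨ρ i, by rwa [hρ]⟩), hρ i⟩

/-- A direct product, regrouped along the orbits of an involution of the index set. -/
noncomputable def piInvolutionEquiv (R : Type*) [Semiring R] {I : Type*} [LinearOrder I]
    {ρ : I → I} (hρ : Function.Involutive ρ) (X : I → Type*)
    [∀ i, AddCommMonoid (X i)] [∀ i, Module R (X i)] :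
    (∀ i, X i) ≃ₗ[R]
      (∀ i : {i // ρ i = i}, X i) × ∀ i : {i // i < ρ i}, X i × X (ρ i) :=
  (LinearEquiv.piCongrLeft R X (involutionEquiv hρ)).symm ≪≫ₗ
    LinearEquiv.sumPiEquivProdPi R _ _ _ ≪≫ₗ
    (LinearEquiv.refl R _).prodCongr
      (LinearEquiv.sumPiEquivProdPi R _ _ _ ≪≫ₗ
        { (Equiv.arrowProdEquivProdArrow _ _ _).symm with
          map_add' := fun _ _ => rfl
          map_smul' := fun _ _ => rfl })

theorem nonempty_pi_equiv_of_involutive {R : Type*} [Semiring R] {I : Type*} {X Y : I → Type*}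
    [∀ i, AddCommMonoid (X i)] [∀ i, Module R (X i)]
    [∀ i, AddCommMonoid (Y i)] [∀ i, Module R (Y i)] {ρ : I → I}
    (hρ : Function.Involutive ρ) (hfix : ∀ i, ρ i = i → Nonempty (X i ≃ₗ[R] Y i))
    (hpair : ∀ i, Nonempty ((X i × X (ρ i)) ≃ₗ[R] (Y i × Y (ρ i)))) :
    Nonempty ((∀ i, X i) ≃ₗ[R] ∀ i, Y i) := by
  obtain ⟨_, -⟩ := exists_wellFoundedLT I
  exact ⟨piInvolutionEquiv R hρ X ≪≫ₗ
    (LinearEquiv.piCongrRight fun i : {i // ρ i = i} => (hfix i i.2).some).prodCongr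
      (LinearEquiv.piCongrRight fun i : {i // i < ρ i} => (hpair i).some) ≪≫ₗ
    (piInvolutionEquiv R hρ Y).symm⟩

end Products

section SameClass

variable {C : Type*} [Category* C] {W : MorphismProperty C} {X Y Z : C}

/-- Two objects are in the same class with respect to `W` if there are morphisms in `W` in both
directions between them: the monogeny class and the upper part are such classes. -/
def SameClass (W : MorphismProperty C) (X Y : C) : Prop :=
  (∃ f : X ⟶ Y, W f) ∧ ∃ g : Y ⟶ X, W g

namespace SameClass

theorem symm (h : SameClass W X Y) : SameClass W Y X := And.symm h

theorem refl (W : MorphismProperty C) [W.ContainsIdentities] (X : C) : SameClass W X X :=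
  ⟨⟨𝟙 X, W.id_mem X⟩, 𝟙 X, W.id_mem X⟩

theorem trans [W.IsStableUnderComposition] (h : SameClass W X Y) (h' : SameClass W Y Z) :
    SameClass W X Z := by
  obtain ⟨⟨f, hf⟩, f', hf'⟩ := h
  obtain ⟨⟨g, hg⟩, g', hg'⟩ := h'
  exact ⟨⟨f ≫ g, W.comp_mem f g hf hg⟩, g' ≫ f', W.comp_mem g' f' hg' hf'⟩

end SameClass

end SameClass

section Preadditive

variable {C : Type*} [Category* C] [Preadditive C]

/-- The morphisms outside `W` form a completely prime ideal of the preadditive category `C`, up to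
the degenerate case that `W` contains all morphisms out of some object. -/
class IsPrimeComplement (W : MorphismProperty C) : Prop extends W.IsMultiplicative where
  of_comp {X Y Z : C} {f : X ⟶ Y} {g : Y ⟶ Z} : W (f ≫ g) → W f
  of_comp_right {X Y Z : C} {f : X ⟶ Y} {g : Y ⟶ Z} : W (f ≫ g) → W g ∨ W (0 : X ⟶ X)
  of_add {X Y : C} {f g : X ⟶ Y} : W (f + g) → W f ∨ W g

namespace IsPrimeComplement

variable {W : MorphismProperty C} [IsPrimeComplement W] {X Y Z : C}

instance : W.RespectsIso :=
  MorphismProperty.respectsIso_of_isStableUnderComposition fun X _ f (_ : IsIso f) =>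
    of_comp (g := inv f) (by simpa using W.id_mem X)

theorem of_isIso (f : X ⟶ Y) [IsIso f] : W f := by
  simpa using (W.cancel_right_of_respectsIso (𝟙 X) f).2 (W.id_mem X)

theorem neg {f : X ⟶ Y} (hf : W f) : W (-f) :=
  of_comp (g := -𝟙 Y) (by simpa using hf)

theorem add_left {f g : X ⟶ Y} (hf : W f) (hg : ¬W g) : W (f + g) :=
  (of_add (f := f + g) (g := -g) (by simpa using hf)).resolve_right fun h =>
    hg (by simpa using neg h)

theorem add_right {f g : X ⟶ Y} (hf : ¬W f) (hg : W g) : W (f + g) :=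
  add_comm g f ▸ add_left hg hf

theorem sub {f g : X ⟶ Y} (hf : W f) (hg : ¬W g) : W (f - g) :=
  sub_eq_add_neg f g ▸ add_left hf fun h => hg (by simpa using neg h)

theorem right_of_comp {T : C} {f : X ⟶ Y} {g : Y ⟶ Z} {k : X ⟶ T} (hk : ¬W k) (h : W (f ≫ g)) :
    W g :=
  (of_comp_right h).resolve_right fun h₀ => hk (of_comp (g := (0 : T ⟶ X)) (by simpa using h₀))

end IsPrimeComplement

open IsPrimeComplement

variable {M U : MorphismProperty C} {X Y Z : C}

theorem SameClass.diff [IsPrimeComplement U] (hMU : M ⊓ U ≤ .isomorphisms C)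
    (hM : SameClass M X Y) (hU : ¬SameClass U X Y) : SameClass (M \ U) X Y := by
  have sameClass_of_mem {X Y : C} {f : X ⟶ Y} (hM : M f) (hU : U f) : SameClass U X Y :=
    have : IsIso f := hMU f ⟨hM, hU⟩
    ⟨⟨f, hU⟩, inv f, of_isIso _⟩
  obtain ⟨⟨f, hf⟩, g, hg⟩ := hM
  exact ⟨⟨f, hf, fun h => hU (sameClass_of_mem hf h)⟩,
    g, hg, fun h => hU (sameClass_of_mem hg h).symm⟩

variable [IsPrimeComplement M] [IsPrimeComplement U]

theorem nonempty_iso_of_sameClass (hMU : M ⊓ U ≤ .isomorphisms C) (hM : SameClass M X Y)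
    (hU : SameClass U X Y) : Nonempty (X ≅ Y) := by
  obtain ⟨⟨f, hf⟩, -⟩ := hM
  obtain ⟨⟨g, hg⟩, -⟩ := hU
  suffices ∃ h : X ⟶ Y, M h ∧ U h from
    let ⟨h, hM, hU⟩ := this
    have : IsIso h := hMU h ⟨hM, hU⟩
    ⟨asIso h⟩
  by_cases hfU : U f
  · exact ⟨f, hf, hfU⟩
  by_cases hgM : M g
  · exact ⟨g, hgM, hg⟩
  · exact ⟨f + g, add_left hf hgM, add_right hfU hg⟩

theorem exists_comp_add_comp_eq_id (hMU : M ⊓ U ≤ .isomorphisms C)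
    (hM : SameClass (M \ U) Y Z) (hU : SameClass (U \ M) X Z) :
    ∃ (a : Y ⟶ Z) (α : Z ⟶ Y) (b : X ⟶ Z) (β : Z ⟶ X),
      (M \ U) a ∧ (U \ M) b ∧ α ≫ a + β ≫ b = 𝟙 Z := by
  obtain ⟨⟨a, ha⟩, α, hα⟩ := hM
  obtain ⟨⟨b, hb⟩, β, hβ⟩ := hU
  let e : Z ⟶ Z := α ≫ a + β ≫ b
  have heM : M e := add_left (M.comp_mem α a hα.1 ha.1) fun h => hβ.2 (of_comp h)
  have heU : U e := add_right (fun h => hα.2 (of_comp h)) (U.comp_mem β b hβ.1 hb.1)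
  have : IsIso e := hMU e ⟨heM, heU⟩
  exact ⟨a, inv e ≫ α, b, inv e ≫ β, ha, hb, by
    rw [Category.assoc, Category.assoc, ← Preadditive.comp_add, IsIso.inv_hom_id]⟩

/-- Every cospan consisting of a morphism in `M` and a morphism in `U` has a pullback, and the
base changes of the two morphisms are in `M` and `U` again. -/
def HasMixedPullbacks (M U : MorphismProperty C) : Prop :=
  ∀ ⦃X Y Z : C⦄ (a : Y ⟶ Z) (b : X ⟶ Z), M a → U b →
    ∃ (P : C) (p : P ⟶ X) (q : P ⟶ Y), IsPullback p q b a ∧ M p ∧ U q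

theorem exists_sameClass_and_sameClass (hMU : M ⊓ U ≤ .isomorphisms C)
    (hpull : HasMixedPullbacks M U) (hM : SameClass M Y Z) (hU : SameClass U X Z) :
    ∃ P, SameClass M P X ∧ SameClass U P Y := by
  by_cases hMX : SameClass M X Z
  · exact ⟨Y, hM.trans hMX.symm, .refl U Y⟩
  by_cases hUY : SameClass U Y Z
  · exact ⟨X, .refl M X, hU.trans hUY.symm⟩
  obtain ⟨a, α, b, β, ha, hb, hid⟩ :=
    exists_comp_add_comp_eq_id hMU (hM.diff hMU hUY) (hU.diff (inf_comm M U ▸ hMU) hMX)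
  -- `P` is the kernel of a split epimorphism `X ⊕ Y ⟶ Z`, and `s`, `t` are the components of the
  -- projection `X ⊕ Y ⟶ P`.
  obtain ⟨P, p, q, hP, hp, hq⟩ := hpull a b ha.1 hb.1
  let s : X ⟶ P := hP.lift (𝟙 X - b ≫ β) (b ≫ α) (by
    rw [Preadditive.sub_comp, Category.id_comp, Category.assoc, Category.assoc, sub_eq_iff_eq_add,
      ← Preadditive.comp_add, hid, Category.comp_id])
  let t : Y ⟶ P := hP.lift (a ≫ β) (𝟙 Y - a ≫ α) (by
    rw [Preadditive.sub_comp, Category.id_comp, Category.assoc, Category.assoc, eq_sub_iff_add_eq',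
      ← Preadditive.comp_add, hid, Category.comp_id])
  have hs : M (s ≫ p) := by
    rw [hP.lift_fst]
    exact sub (M.id_mem X) fun h => hb.2 (of_comp h)
  have ht : U (t ≫ q) := by
    rw [hP.lift_snd]
    exact sub (U.id_mem Y) fun h => ha.2 (of_comp h)
  exact ⟨P, ⟨⟨p, hp⟩, s, of_comp hs⟩, ⟨q, hq⟩, t, of_comp ht⟩

theorem exists_sameClass_and_sameClass_of_sameCycle {I : Type*} {X Y : I → C}
    (hMU : M ⊓ U ≤ .isomorphisms C) (hpull : HasMixedPullbacks M U) {π : Equiv.Perm I}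
    (hM : ∀ i, SameClass M (X i) (Y i)) (hU : ∀ i, SameClass U (X (π i)) (Y i)) {i j : I}
    (h : π.SameCycle i j) : ∃ Z, SameClass M Z (X i) ∧ SameClass U Z (X j) := by
  let r (i j : I) : Prop := ∃ Z, SameClass M Z (X i) ∧ SameClass U Z (X j)
  have r_symm {i j : I} : r i j → r j i := fun ⟨Z, hZi, hZj⟩ =>
    exists_sameClass_and_sameClass hMU hpull hZi.symm hZj.symm
  have r_trans {i j k : I} : r i j → r j k → r i k := fun ⟨Z, hZi, hZj⟩ ⟨Z', hZ'j, hZ'k⟩ =>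
    let ⟨Z'', hM, hU⟩ := exists_sameClass_and_sameClass hMU hpull hZ'j hZj
    ⟨Z'', hM.trans hZi, hU.trans hZ'k⟩
  have r_apply (i : I) : r i (π i) := ⟨Y i, (hM i).symm, (hU i).symm⟩
  have r_inv_apply (i : I) : r i (π⁻¹ i) := r_symm (by simpa using r_apply (π⁻¹ i))
  obtain ⟨n, rfl⟩ := h
  refine zpow_induction_left (P := fun g : Equiv.Perm I => r i (g i)) ⟨X i, .refl M _, .refl U _⟩
    (fun _ h => r_trans h (r_apply _)) (fun _ h => r_trans h (r_inv_apply _)) n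

end Preadditive

section Biproducts

variable {C D : Type*} [Category* C] [Category* D] [Preadditive C] [Preadditive D]
  [HasBinaryBiproducts D]

theorem isIso_biprod_ofComponents {X₁ X₂ Y₁ Y₂ : D} (p : X₁ ⟶ Y₁) (q : X₁ ⟶ Y₂) (r : X₂ ⟶ Y₁)
    (s : X₂ ⟶ Y₂) [IsIso p] [IsIso (s - r ≫ inv p ≫ q)] :
    IsIso (Biprod.ofComponents p q r s) := by
  have h : (Biprod.unipotentLower (-r ≫ inv p)).hom ≫ Biprod.ofComponents p q r s ≫
      (Biprod.unipotentUpper (-inv p ≫ q)).hom = biprod.map p (s - r ≫ inv p ≫ q) :=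
    (Biprod.gaussian' p q r s).2.2.2
  rw [← isIso_comp_left_iff (Biprod.unipotentLower (-r ≫ inv p)).hom,
    ← isIso_comp_right_iff _ (Biprod.unipotentUpper (-inv p ≫ q)).hom, Category.assoc, h]
  exact (biprod.mapIso (asIso p) (asIso (s - r ≫ inv p ≫ q))).isIso_hom

open IsPrimeComplement

variable {M U : MorphismProperty C} [IsPrimeComplement M] [IsPrimeComplement U]
  (G : C ⥤ D) [G.Additive] {X₁ X₂ Y₁ Y₂ Z₁ Z₂ : C}

theorem isIso_biprod_ofComponents_map (hMU : M ⊓ U ≤ .isomorphisms C) {p : X₁ ⟶ Y₁} (q : X₁ ⟶ Y₂)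
    {r : X₂ ⟶ Y₁} {s : X₂ ⟶ Y₂} (hp : (M ⊓ U) p) (hs : (M ⊓ U) s) (hrM : ¬M r) (hrU : ¬U r) :
    IsIso (Biprod.ofComponents (G.map p) (G.map q) (G.map r) (G.map s)) := by
  have : IsIso p := hMU p hp
  have : IsIso (s - r ≫ inv p ≫ q) :=
    hMU _ ⟨sub hs.1 fun h => hrM (of_comp h), sub hs.2 fun h => hrU (of_comp h)⟩
  have : IsIso (G.map s - G.map r ≫ inv (G.map p) ≫ G.map q) := by
    simpa using (inferInstance : IsIso (G.map (s - r ≫ inv p ≫ q)))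
  exact isIso_biprod_ofComponents _ _ _ _

theorem isIso_biprod_ofComponents_map_comp (hMU : M ⊓ U ≤ .isomorphisms C)
    {a₁ : X₁ ⟶ Y₁} {b₁ : X₁ ⟶ Y₂} {b₂ : X₂ ⟶ Y₁} {a₂ : X₂ ⟶ Y₂}
    {a₁' : Y₁ ⟶ Z₁} {b₁' : Y₁ ⟶ Z₂} {b₂' : Y₂ ⟶ Z₁} {a₂' : Y₂ ⟶ Z₂}
    (ha₁ : (M \ U) a₁) (hb₁ : (U \ M) b₁) (hb₂ : (U \ M) b₂) (ha₂ : (M \ U) a₂)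
    (ha₁' : (M \ U) a₁') (hb₁' : (U \ M) b₁') (hb₂' : (U \ M) b₂') (ha₂' : (M \ U) a₂') :
    IsIso (Biprod.ofComponents (G.map a₁) (G.map b₁) (G.map b₂) (G.map a₂) ≫
      Biprod.ofComponents (G.map a₁') (G.map b₁') (G.map b₂') (G.map a₂')) := by
  have diag {X Y Y' Z : C} {a : X ⟶ Y} {a' : Y ⟶ Z} {b : X ⟶ Y'} {b' : Y' ⟶ Z}
      (ha : (M \ U) a) (ha' : (M \ U) a') (hb : (U \ M) b) (hb' : (U \ M) b') :
      (M ⊓ U) (a ≫ a' + b ≫ b') :=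
    ⟨add_left (M.comp_mem a a' ha.1 ha'.1) fun h => hb.2 (of_comp h),
      add_right (fun h => ha.2 (of_comp h)) (U.comp_mem b b' hb.1 hb'.1)⟩
  simp only [Biprod.ofComponents_comp, ← G.map_comp, ← G.map_add]
  refine isIso_biprod_ofComponents_map G hMU _ (diag ha₁ ha₁' hb₁ hb₂')
    (add_comm (a₂ ≫ a₂') _ ▸ diag ha₂ ha₂' hb₂ hb₁') (fun h => ?_) fun h => ?_
  · exact (of_add h).elim (fun h => hb₂.2 (of_comp h)) fun h => hb₂'.2 (right_of_comp hb₂.2 h)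
  · exact (of_add h).elim (fun h => ha₁'.2 (right_of_comp ha₂.2 h)) fun h => ha₂.2 (of_comp h)

theorem nonempty_biprod_map_iso_of_sameClass (hMU : M ⊓ U ≤ .isomorphisms C)
    (hM₁ : SameClass M X₁ Y₁) (hM₂ : SameClass M X₂ Y₂)
    (hU₁ : SameClass U X₁ Y₂) (hU₂ : SameClass U X₂ Y₁) :
    Nonempty (G.obj X₁ ⊞ G.obj X₂ ≅ G.obj Y₁ ⊞ G.obj Y₂) := by
  by_cases hU : SameClass U X₁ Y₁
  · obtain ⟨e₁⟩ := nonempty_iso_of_sameClass hMU hM₁ hU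
    obtain ⟨e₂⟩ := nonempty_iso_of_sameClass hMU hM₂ ((hU₂.trans hU.symm).trans hU₁)
    exact ⟨biprod.mapIso (G.mapIso e₁) (G.mapIso e₂)⟩
  by_cases hM : SameClass M X₁ Y₂
  · obtain ⟨e₁⟩ := nonempty_iso_of_sameClass hMU hM hU₁
    obtain ⟨e₂⟩ := nonempty_iso_of_sameClass hMU ((hM₂.trans hM.symm).trans hM₁) hU₂
    exact ⟨biprod.mapIso (G.mapIso e₁) (G.mapIso e₂) ≪≫ biprod.braiding _ _⟩
  have hUM : U ⊓ M ≤ .isomorphisms C := inf_comm M U ▸ hMU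
  obtain ⟨⟨a₁, ha₁⟩, a₁', ha₁'⟩ := hM₁.diff hMU hU
  obtain ⟨⟨a₂, ha₂⟩, a₂', ha₂'⟩ := hM₂.diff hMU fun h => hU ((hU₁.trans h.symm).trans hU₂)
  obtain ⟨⟨b₁, hb₁⟩, b₁', hb₁'⟩ := hU₁.diff hUM hM
  obtain ⟨⟨b₂, hb₂⟩, b₂', hb₂'⟩ := hU₂.diff hUM fun h => hM ((hM₁.trans h.symm).trans hM₂)
  let f := Biprod.ofComponents (G.map a₁) (G.map b₁) (G.map b₂) (G.map a₂)
  let g := Biprod.ofComponents (G.map a₁') (G.map b₂') (G.map b₁') (G.map a₂')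
  have : IsIso (f ≫ g) :=
    isIso_biprod_ofComponents_map_comp G hMU ha₁ hb₁ hb₂ ha₂ ha₁' hb₂' hb₁' ha₂'
  have : IsIso (g ≫ f) :=
    isIso_biprod_ofComponents_map_comp G hMU ha₁' hb₂' hb₁' ha₂' ha₁ hb₁ hb₂ ha₂
  have : Mono f := mono_of_mono f g
  have : IsSplitEpi f := .mk' ⟨inv (g ≫ f) ≫ g, by simp⟩
  have : IsIso f := isIso_of_mono_of_isSplitEpi f
  exact ⟨asIso f⟩

end Biproducts

section Modules

universe w

variable {R : Type*} [Ring R] {C : Type*} [Category* C] [Preadditive C]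
  {M U : MorphismProperty C} [IsPrimeComplement M] [IsPrimeComplement U]
  (G : C ⥤ ModuleCat.{w} R) [G.Additive]

theorem nonempty_prod_equiv_of_sameClass {X₁ X₂ Y₁ Y₂ : C} (hMU : M ⊓ U ≤ .isomorphisms C)
    (hM₁ : SameClass M X₁ Y₁) (hM₂ : SameClass M X₂ Y₂)
    (hU₁ : SameClass U X₁ Y₂) (hU₂ : SameClass U X₂ Y₁) :
    Nonempty ((G.obj X₁ × G.obj X₂) ≃ₗ[R] G.obj Y₁ × G.obj Y₂) :=
  (nonempty_biprod_map_iso_of_sameClass G hMU hM₁ hM₂ hU₁ hU₂).map fun e =>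
    ((ModuleCat.biprodIsoProd _ _).symm ≪≫ e ≪≫ ModuleCat.biprodIsoProd _ _).toLinearEquiv

theorem nonempty_pi_equiv_of_sameClass_involutive {I : Type*} {X Y : I → C}
    (hMU : M ⊓ U ≤ .isomorphisms C) {ρ : I → I} (hρ : Function.Involutive ρ)
    (hM : ∀ i, SameClass M (X i) (Y i)) (hU : ∀ i, SameClass U (X (ρ i)) (Y i)) :
    Nonempty ((∀ i, G.obj (X i)) ≃ₗ[R] ∀ i, G.obj (Y i)) := by
  refine nonempty_pi_equiv_of_involutive hρ (fun i hi => ?_) fun i => ?_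
  · exact (nonempty_iso_of_sameClass hMU (hM i) (by simpa only [hi] using hU i)).map
      fun e => (G.mapIso e).toLinearEquiv
  · have hUρ := hU (ρ i)
    rw [hρ] at hUρ
    exact nonempty_prod_equiv_of_sameClass G hMU (hM i) (hM (ρ i)) hUρ (hU i)

theorem nonempty_pi_equiv_of_sameClass {I : Type*} {X Y : I → C}
    (hMU : M ⊓ U ≤ .isomorphisms C) (hpull : HasMixedPullbacks M U) (π : Equiv.Perm I)
    (hM : ∀ i, SameClass M (X i) (Y i)) (hU : ∀ i, SameClass U (X (π i)) (Y i)) :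
    Nonempty ((∀ i, G.obj (X i)) ≃ₗ[R] ∀ i, G.obj (Y i)) := by
  obtain ⟨ρ, hρ, hρπ, hcycle⟩ := exists_involutive_comp_involutive π
  choose Z hZM hZU using fun i =>
    exists_sameClass_and_sameClass_of_sameCycle hMU hpull hM hU (hcycle i)
  obtain ⟨e⟩ := nonempty_pi_equiv_of_sameClass_involutive G hMU hρ (fun i => (hZM i).symm)
    fun i => (hZU i).symm
  obtain ⟨e'⟩ := nonempty_pi_equiv_of_sameClass_involutive G hMU hρπ
    (fun i => (hZM i).trans (hM i))
    fun i => .trans (by simpa only [Function.comp_apply, hρ (π i)] using hZU (ρ (π i))) (hU i)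
  exact ⟨e ≪≫ₗ e'⟩

end Modules

section Submodules

universe v w

variable {R : Type*} [Ring R]

/-- `S` is not the intersection of two strictly larger submodules. In contrast to `InfIrred`, the
improper submodule `⊤` is allowed, as it is the kernel of a zero map. For `S = ⊥` the condition
says that `E` is uniform or zero. -/
def IsMeetIrreducible {E : Type*} [AddCommGroup E] [Module R E] (S : Submodule R E) : Prop :=
  ∀ ⦃A B : Submodule R E⦄, S ≤ A → S ≤ B → A ⊓ B ≤ S → A ≤ S ∨ B ≤ S

theorem IsMeetIrreducible.comap {E F : Type*} [AddCommGroup E] [Module R E] [AddCommGroup F]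
    [Module R F] {S : Submodule R F} (hS : IsMeetIrreducible S) (f : E →ₗ[R] F) :
    IsMeetIrreducible (S.comap f) := by
  intro A B _ hB hAB
  have h : (A.map f ⊔ S) ⊓ (B.map f ⊔ S) ≤ S := by
    rintro y ⟨hyA, hyB⟩
    obtain ⟨_, ⟨x, hx, rfl⟩, s, hs, rfl⟩ := Submodule.mem_sup.1 hyA
    have hxB : x ∈ (B.map f ⊔ S).comap f := by
      simpa using (B.map f ⊔ S).sub_mem hyB (le_sup_right (a := B.map f) hs)
    rw [Submodule.comap_map_sup_of_comap_le hB] at hxB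
    exact S.add_mem (hAB ⟨hx, hxB⟩) hs
  exact (hS le_sup_right le_sup_right h).imp
    (fun h => Submodule.map_le_iff_le_comap.1 (le_sup_left.trans h))
    fun h => Submodule.map_le_iff_le_comap.1 (le_sup_left.trans h)

theorem exists_le_maximal_disjoint {α : Type*} [CompleteLattice α] [IsCompactlyGenerated α]
    {a b : α} (h : Disjoint a b) : ∃ m, a ≤ m ∧ Maximal (fun x => Disjoint x b) m :=
  zorn_le_nonempty₀ {x | Disjoint x b} (fun c hc hchain _ _ =>
    ⟨sSup c, hchain.directedOn.disjoint_sSup_left.2 hc, fun _ => le_sSup⟩) a h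

theorem exists_linearMap_extension {M : Type*} {Q : Type v} [AddCommGroup M] [Module R M]
    [AddCommGroup Q] [Module R Q] (hQ : Module.Injective R Q) [Small.{v} M] {A : Submodule R M}
    (f : A →ₗ[R] Q) : ∃ g : M →ₗ[R] Q, ∀ a : A, g a = f a := by
  have : Small.{v} A := small_of_injective A.subtype_injective
  let e := Shrink.linearEquiv R M
  let d := Shrink.linearEquiv R A
  obtain ⟨g, hg⟩ := hQ.out (e.symm.toLinearMap ∘ₗ A.subtype ∘ₗ d.toLinearMap)
    (e.symm.injective.comp (A.subtype_injective.comp d.injective)) (f ∘ₗ d.toLinearMap)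
  exact ⟨g ∘ₗ e.symm.toLinearMap, fun a => by simpa using hg (d.symm a)⟩

theorem exists_linearMap_of_disjoint {E : Type*} [AddCommGroup E] [Module R E]
    (hE : Module.Injective R E) {C D : Submodule R E} (h : Disjoint C D) :
    ∃ p : E →ₗ[R] E, (∀ x ∈ C, p x = x) ∧ D ≤ LinearMap.ker p := by
  have hinj : Function.Injective (D.mkQ ∘ₗ C.subtype) := by
    rw [← LinearMap.ker_eq_bot, LinearMap.ker_comp, Submodule.ker_mkQ,
      ← Submodule.disjoint_iff_comap_eq_bot]
    exact h
  obtain ⟨q, hq⟩ := hE.out _ hinj C.subtype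
  have hD : D ≤ LinearMap.ker (q ∘ₗ D.mkQ) :=
    D.ker_mkQ.ge.trans (LinearMap.ker_le_ker_comp D.mkQ q)
  exact ⟨q ∘ₗ D.mkQ, fun x hx => hq ⟨x, hx⟩, hD⟩

theorem isMeetIrreducible_bot {E : Type*} [AddCommGroup E] [Module R E]
    (hE : IsIndecomposableModule R E) (hinj : Module.Injective R E) :
    IsMeetIrreducible (⊥ : Submodule R E) := by
  intro C D _ _ hCD
  obtain ⟨D', hD, hD'⟩ := exists_le_maximal_disjoint (disjoint_iff_inf_le.2 hCD).symm
  obtain ⟨C', hC, hC'⟩ := exists_le_maximal_disjoint hD'.prop.symm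
  obtain ⟨p, hpC, hpD⟩ := exists_linearMap_of_disjoint hinj hC'.prop
  -- By maximality of `D'` and then of `C'`, the map `p` is a projection onto `C'`.
  have hcomap : D'.comap p ≤ D' := by
    refine hD'.2 (Submodule.disjoint_def.2 fun x hx hxC => ?_) fun x hx => ?_
    · rw [Submodule.mem_comap, hpC x (hC hxC)] at hx
      exact Submodule.disjoint_def.1 hD'.prop x hx hxC
    · rw [Submodule.mem_comap, LinearMap.mem_ker.1 (hpD hx)]
      exact D'.zero_mem
  have hrange : LinearMap.range p ≤ C' := by
    refine hC'.2 (Submodule.disjoint_def.2 ?_) fun x hx => ⟨x, hpC x hx⟩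
    rintro _ ⟨x, rfl⟩ hx
    exact hpD (hcomap hx)
  have hp : LinearMap.IsProj C' p := ⟨fun x => hrange ⟨x, rfl⟩, hpC⟩
  exact (hE.2 C' _ hp.isCompl.inf_eq_bot hp.isCompl.sup_eq_top).imp (fun h => hC.trans h.le)
    fun h => (hD.trans hpD).trans h.le

theorem bijective_of_injective_of_isMeetIrreducible_bot {E : Type v} {F : Type*}
    [AddCommGroup E] [Module R E] [AddCommGroup F] [Module R F] [Nontrivial E] [Small.{v} F]
    (hE : Module.Injective R E) (hF : IsMeetIrreducible (⊥ : Submodule R F))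
    {f : E →ₗ[R] F} (hf : Function.Injective f) : Function.Bijective f := by
  obtain ⟨g, hg⟩ := exists_linearMap_extension hE (LinearEquiv.ofInjective f hf).symm.toLinearMap
  have hgf (x : E) : g (f x) = x :=
    (hg ⟨f x, x, rfl⟩).trans ((LinearEquiv.ofInjective f hf).symm_apply_apply x)
  have hdisj : LinearMap.range f ⊓ LinearMap.ker g ≤ ⊥ := by
    rintro _ ⟨⟨x, rfl⟩, hx⟩
    have hx0 : x = 0 := (hgf x).symm.trans hx
    simp [hx0]
  have hrange : ¬LinearMap.range f ≤ ⊥ := fun h => by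
    obtain ⟨x, hx⟩ := exists_ne (0 : E)
    exact hx (hf ((h ⟨x, rfl⟩ : f x = 0).trans (map_zero f).symm))
  have hker : LinearMap.ker g ≤ ⊥ := (hF bot_le bot_le hdisj).resolve_left hrange
  exact ⟨hf, fun y => ⟨g y, LinearMap.ker_eq_bot.1 (le_bot_iff.1 hker) (hgf _)⟩⟩

theorem exists_injective_extension {E : Type*} {F : Type v} [AddCommGroup E] [Module R E]
    [AddCommGroup F] [Module R F] [Small.{v} E] (hF : Module.Injective R F)
    (hE : IsMeetIrreducible (⊥ : Submodule R E)) {A : Submodule R E} (hA : A ≠ ⊥)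
    {f : A →ₗ[R] F} (hf : Function.Injective f) :
    ∃ g : E →ₗ[R] F, Function.Injective g ∧ ∀ a : A, g a = f a := by
  obtain ⟨g, hg⟩ := exists_linearMap_extension hF f
  have hdisj : LinearMap.ker g ⊓ A ≤ ⊥ := by
    rintro x ⟨hx, hxA⟩
    have h : f ⟨x, hxA⟩ = f 0 := by rw [← hg, map_zero]; exact hx
    simpa using congrArg Subtype.val (hf h)
  have hker := (hE bot_le bot_le hdisj).resolve_right fun h => hA (le_bot_iff.1 h)
  exact ⟨g, LinearMap.ker_eq_bot.1 (le_bot_iff.1 hker), hg⟩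

/-- Two submodules `A ≤ E` and `B ≤ F` of injective modules have the same upper part if there are
homomorphisms `E → F` and `F → E` inducing injective homomorphisms `E ⧸ A → F ⧸ B` and
`F ⧸ B → E ⧸ A`. -/
def SameUpperPart {E F : Type*} [AddCommGroup E] [Module R E] [AddCommGroup F] [Module R F]
    (A : Submodule R E) (B : Submodule R F) : Prop :=
  ∃ (φ : E →ₗ[R] F) (ψ : F →ₗ[R] E), B.comap φ = A ∧ A.comap ψ = B

namespace SameUpperPart

variable {E F : Type*} [AddCommGroup E] [Module R E] [AddCommGroup F] [Module R F]
  {A : Submodule R E} {B : Submodule R F}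

theorem symm (h : SameUpperPart A B) : SameUpperPart B A :=
  let ⟨φ, ψ, hφ, hψ⟩ := h
  ⟨ψ, φ, hψ, hφ⟩

theorem isMeetIrreducible (h : SameUpperPart A B) (hA : IsMeetIrreducible A) :
    IsMeetIrreducible B := by
  obtain ⟨-, ψ, -, hψ⟩ := h
  exact hψ ▸ hA.comap ψ

theorem comap_equiv {F' : Type*} [AddCommGroup F'] [Module R F'] (h : SameUpperPart A B)
    (e : F' ≃ₗ[R] F) : SameUpperPart A (B.comap e.toLinearMap) := by
  obtain ⟨φ, ψ, hφ, hψ⟩ := h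
  refine ⟨e.symm.toLinearMap ∘ₗ φ, ψ ∘ₗ e.toLinearMap, ?_, ?_⟩
  · simpa [← Submodule.comap_comp, ← LinearMap.comp_assoc] using hφ
  · rw [Submodule.comap_comp, hψ]

theorem small (h : SameUpperPart A B) [Small.{w} A] [Small.{w} F] : Small.{w} E := by
  obtain ⟨φ, -, hφ, -⟩ := h
  have : Small.{w} (F ⧸ B) := small_of_surjective B.mkQ_surjective
  have : Small.{w} (E ⧸ A) := small_of_injective (f := A.mapQ B φ hφ.ge) <| by
    rw [← LinearMap.ker_eq_bot, Submodule.ker_mapQ, hφ, Submodule.mkQ_map_self]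
  let e : E ≃ (E ⧸ A) × A := AddSubgroup.addGroupEquivQuotientProdAddSubgroup
  exact small_of_injective e.injective

end SameUpperPart

theorem nonempty_equiv_of_injective {E : Type v} {F : Type w} [AddCommGroup E] [Module R E]
    [AddCommGroup F] [Module R F] [Small.{w} E] [Small.{v} F] (hE : IsIndecomposableModule R E)
    (hEinj : Module.Injective R E) (hF : IsIndecomposableModule R F)
    (hFinj : Module.Injective R F) {A : Submodule R E} (hA : A ≠ ⊥) {f : A →ₗ[R] F}
    (hf : Function.Injective f) : Nonempty (E ≃ₗ[R] F) := by
  have : Nontrivial E := (nontrivial_iff_exists_ne 0).2 hE.1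
  obtain ⟨g, hg, -⟩ := exists_injective_extension hFinj (isMeetIrreducible_bot hE hEinj) hA hf
  exact ⟨.ofBijective g <| bijective_of_injective_of_isMeetIrreducible_bot hEinj
    (isMeetIrreducible_bot hF hFinj) hg⟩

end Submodules

section Pairs

universe v

/-- An indecomposable injective module together with a meet-irreducible submodule, for instance the
kernel of a homomorphism to an indecomposable injective module. -/
structure InjectivePair (R : Type*) [Ring R] where
  carrier : ModuleCat.{v} R
  sub : Submodule R carrier
  injective : Module.Injective R carrier
  indecomposable : IsIndecomposableModule R carrier
  isMeetIrreducible : IsMeetIrreducible sub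

namespace InjectivePair

variable {R : Type*} [Ring R] {X Y Z : InjectivePair.{v} R}

/-- The homomorphisms between the ambient modules which map the submodule into the submodule. -/
def homs (X Y : InjectivePair.{v} R) : AddSubgroup (X.carrier →ₗ[R] Y.carrier) where
  carrier := {f | X.sub ≤ Y.sub.comap f}
  zero_mem' _ _ := Y.sub.zero_mem
  add_mem' hf hg _ hx := Y.sub.add_mem (hf hx) (hg hx)
  neg_mem' hf _ hx := Y.sub.neg_mem (hf hx)

instance : Category (InjectivePair.{v} R) where
  Hom X Y := homs X Y
  id X := ⟨LinearMap.id, fun _ hx => hx⟩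
  comp f g := ⟨g.1 ∘ₗ f.1, fun _ hx => g.2 (f.2 hx)⟩

instance : Preadditive (InjectivePair.{v} R) where
  homGroup X Y := inferInstanceAs (AddCommGroup (homs X Y))
  add_comp _ _ _ f f' g := Subtype.ext (LinearMap.comp_add f.1 f'.1 g.1)
  comp_add _ _ _ f g g' := Subtype.ext (LinearMap.add_comp f.1 g'.1 g.1)

/-- The homomorphism of ambient modules underlying a morphism of pairs. -/
def ambient (f : X ⟶ Y) : X.carrier →ₗ[R] Y.carrier := f.1

/-- The morphism of pairs given by a compatible homomorphism of ambient modules. -/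
def homMk (f : X.carrier →ₗ[R] Y.carrier) (hf : X.sub ≤ Y.sub.comap f) : X ⟶ Y := ⟨f, hf⟩

theorem sub_le_comap (f : X ⟶ Y) : X.sub ≤ Y.sub.comap (ambient f) := f.2

@[ext]
theorem hom_ext {f g : X ⟶ Y} (h : ∀ x, ambient f x = ambient g x) : f = g :=
  Subtype.ext (LinearMap.ext h)

/-- The functor sending a pair to its submodule. -/
def toModuleCat : InjectivePair.{v} R ⥤ ModuleCat.{v} R where
  obj X := ModuleCat.of R X.sub
  map f := ModuleCat.ofHom ((ambient f).restrict fun _ hx => sub_le_comap f hx)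
  map_id _ := rfl
  map_comp _ _ := rfl

instance : (toModuleCat (R := R)).Additive where
  map_add := rfl

/-- For a submodule `S X` of the ambient module that is natural in the pair `X`, these are the
morphisms which are injective modulo `S`. -/
def injectiveModulo (S : ∀ X : InjectivePair.{v} R, Submodule R X.carrier) :
    MorphismProperty (InjectivePair.{v} R) :=
  fun X Y f => (S Y).comap (ambient f) ≤ S X

theorem isPrimeComplement_injectiveModulo {S : ∀ X : InjectivePair.{v} R, Submodule R X.carrier}
    (hS : ∀ {X Y : InjectivePair.{v} R} (f : X ⟶ Y), S X ≤ (S Y).comap (ambient f))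
    (hirr : ∀ X, IsMeetIrreducible (S X)) : IsPrimeComplement (injectiveModulo S) where
  id_mem _ _ hx := hx
  comp_mem _ _ hf hg _ hx := hf (hg hx)
  of_comp {_ _ _ _ g} h _ hx := h (hS g hx)
  of_comp_right {X Y Z f g} h := by
    have hinf : (S Z).comap (ambient g) ⊓ (LinearMap.range (ambient f) ⊔ S Y) ≤ S Y := by
      rintro y ⟨hy, hy'⟩
      obtain ⟨_, ⟨x, rfl⟩, s, hs, rfl⟩ := Submodule.mem_sup.1 hy'
      refine (S Y).add_mem (hS f (h ?_)) hs
      exact ((S Z).add_mem_iff_left (hS g hs)).1 ((map_add (ambient g) _ s).symm ▸ hy)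
    refine (hirr Y (hS g) le_sup_right hinf).imp id fun hrange x _ => h (hS g ?_)
    exact hrange (Submodule.mem_sup_left ⟨x, rfl⟩)
  of_add {X Y f g} h :=
    hirr X (hS f) (hS g) fun _ hx => h ((S Y).add_mem hx.1 hx.2)

/-- The morphisms which are injective on the ambient modules. They define the monogeny class. -/
abbrev monogeny : MorphismProperty (InjectivePair.{v} R) := injectiveModulo fun _ => ⊥

/-- The morphisms which are injective on the quotients by the submodules. They define the upper
part. -/
abbrev upper : MorphismProperty (InjectivePair.{v} R) := injectiveModulo sub

instance : IsPrimeComplement (monogeny (R := R)) :=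
  isPrimeComplement_injectiveModulo (fun _ => bot_le) fun X =>
    isMeetIrreducible_bot X.indecomposable X.injective

instance : IsPrimeComplement (upper (R := R)) :=
  isPrimeComplement_injectiveModulo sub_le_comap isMeetIrreducible

theorem monogeny_iff {f : X ⟶ Y} : monogeny f ↔ Function.Injective (ambient f) :=
  le_bot_iff.trans LinearMap.ker_eq_bot

theorem bijective_of_monogeny {f : X ⟶ Y} (hf : monogeny f) : Function.Bijective (ambient f) :=
  have : Nontrivial X.carrier := nontrivial_iff_exists_ne 0 |>.2 X.indecomposable.1
  bijective_of_injective_of_isMeetIrreducible_bot X.injective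
    (isMeetIrreducible_bot Y.indecomposable Y.injective) (monogeny_iff.1 hf)

theorem monogeny_inf_upper_le_isomorphisms :
    monogeny ⊓ upper ≤ MorphismProperty.isomorphisms (InjectivePair.{v} R) := by
  rintro X Y f ⟨hM, hU⟩
  let e := LinearEquiv.ofBijective (ambient f) (bijective_of_monogeny hM)
  refine ⟨homMk e.symm.toLinearMap fun y hy => hU ?_, hom_ext e.symm_apply_apply,
    hom_ext e.apply_symm_apply⟩
  exact (congrArg (· ∈ Y.sub) (e.apply_symm_apply y)).mpr hy

theorem hasMixedPullbacks_monogeny_upper : HasMixedPullbacks (monogeny (R := R)) upper := by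
  intro X Y Z a b ha hb
  let e := LinearEquiv.ofBijective (ambient a) (bijective_of_monogeny ha)
  let n : X.carrier →ₗ[R] Y.carrier := e.symm.toLinearMap ∘ₗ ambient b
  have hn (x : X.carrier) : ambient a (n x) = ambient b x := e.apply_symm_apply _
  let P : InjectivePair R :=
    ⟨X.carrier, Y.sub.comap n, X.injective, X.indecomposable, Y.isMeetIrreducible.comap n⟩
  have hp : P.sub ≤ X.sub := fun x hx => hb <| by
    rw [Submodule.mem_comap, ← hn]
    exact sub_le_comap a hx
  let p : P ⟶ X := homMk (X := P) LinearMap.id hp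
  let q : P ⟶ Y := homMk (X := P) n le_rfl
  have hcomm {T : InjectivePair R} {s : T ⟶ X} {t : T ⟶ Y} (h : s ≫ b = t ≫ a)
      (x : T.carrier) : n (ambient s x) = ambient t x := by
    apply monogeny_iff.1 ha
    rw [hn]
    exact congrArg (ambient · x) h
  refine ⟨P, p, q, ⟨⟨hom_ext fun x => (hn x).symm⟩, ⟨PullbackCone.IsLimit.mk _
    (fun s => homMk (Y := P) (ambient (Y := X) s.fst) fun x hx => ?_) (fun _ => rfl)
    (fun s => hom_ext (hcomm s.condition)) fun s m h _ => ?_⟩⟩,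
    fun _ hx => hx, le_rfl⟩
  · rw [Submodule.mem_comap, Submodule.mem_comap, hcomm s.condition]
    exact sub_le_comap s.snd hx
  · exact hom_ext fun x => LinearMap.congr_fun (congrArg ambient h :) x

theorem exists_hom_monogeny (hX : X.sub ≠ ⊥) {f : X.sub →ₗ[R] Y.sub} (hf : Function.Injective f) :
    ∃ g : X ⟶ Y, monogeny g := by
  obtain ⟨g, hg, hgf⟩ := exists_injective_extension Y.injective
    (isMeetIrreducible_bot X.indecomposable X.injective) hX
    (f := Y.sub.subtype ∘ₗ f) (Y.sub.subtype_injective.comp hf)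
  have hmem (x : X.sub) : g x ∈ Y.sub := (hgf x).symm ▸ (f x).2
  exact ⟨homMk g fun x hx => hmem ⟨x, hx⟩, monogeny_iff.2 hg⟩

theorem sameClass_monogeny (hX : X.sub ≠ ⊥) (h : SameMonogenyClass R X.sub Y.sub) :
    SameClass monogeny X Y := by
  obtain ⟨⟨f, hf⟩, g, hg⟩ := h
  have hY : Y.sub ≠ ⊥ := by
    rw [← Submodule.nontrivial_iff_ne_bot] at hX ⊢
    exact hf.nontrivial
  exact ⟨exists_hom_monogeny hX hf, exists_hom_monogeny hY hg⟩

theorem sameClass_upper (h : SameUpperPart X.sub Y.sub) : SameClass upper X Y :=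
  let ⟨φ, ψ, hφ, hψ⟩ := h
  ⟨⟨homMk φ hφ.ge, hφ.le⟩, homMk ψ hψ.ge, hψ.le⟩

theorem nonempty_pi_sub_equiv {I : Type*} {X Y : I → InjectivePair.{v} R} (π : Equiv.Perm I)
    (hX : ∀ i, (X i).sub ≠ ⊥) (hm : ∀ i, SameMonogenyClass R (X i).sub (Y i).sub)
    (hu : ∀ i, SameUpperPart (X (π i)).sub (Y i).sub) :
    Nonempty ((∀ i, (X i).sub) ≃ₗ[R] ∀ i, (Y i).sub) :=
  nonempty_pi_equiv_of_sameClass toModuleCat monogeny_inf_upper_le_isomorphisms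
    hasMixedPullbacks_monogeny_upper π (fun i => sameClass_monogeny (hX i) (hm i))
    fun i => sameClass_upper (hu i)

end InjectivePair

end Pairs

section Families

universe v w

theorem nonempty_pi_equiv_of_perm {R : Type*} [Ring R] {I : Type*} {E : I → Type v}
    {F : I → Type w} [∀ i, AddCommGroup (E i)] [∀ i, Module R (E i)]
    [∀ i, AddCommGroup (F i)] [∀ i, Module R (F i)]
    (hE : ∀ i, IsIndecomposableModule R (E i)) (hEinj : ∀ i, Module.Injective R (E i))
    (hF : ∀ i, IsIndecomposableModule R (F i)) (hFinj : ∀ i, Module.Injective R (F i))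
    {A : ∀ i, Submodule R (E i)} {B : ∀ i, Submodule R (F i)}
    (hA₀ : ∀ i, A i ≠ ⊥) (hA : ∀ i, IsMeetIrreducible (A i)) (π : Equiv.Perm I)
    (hm : ∀ i, SameMonogenyClass R (A i) (B i)) (hu : ∀ i, SameUpperPart (A (π i)) (B i)) :
    Nonempty ((∀ i, A i) ≃ₗ[R] ∀ i, B i) := by
  have he (i : I) : Nonempty (E i ≃ₗ[R] F i) := by
    obtain ⟨⟨f, hf⟩, g, hg⟩ := hm i
    have hu' := hu (π.symm i)
    rw [π.apply_symm_apply] at hu'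
    have : Small.{w} (A i) := small_of_injective hf
    have : Small.{v} (B i) := small_of_injective hg
    have : Small.{w} (E i) := hu'.small
    have : Small.{v} (F i) := (hu i).symm.small
    exact nonempty_equiv_of_injective (hE i) (hEinj i) (hF i) (hFinj i) (hA₀ i)
      (f := (B i).subtype ∘ₗ f) ((B i).subtype_injective.comp hf)
  let e (i : I) : E i ≃ₗ[R] F i := (he i).some
  -- The modules `F i` may live in another universe, so `B i` is transported to `E i`.
  let d (i : I) : (B i).comap (e i).toLinearMap ≃ₗ[R] B i := (e i).ofSubmodule' (B i)
  let X (i : I) : InjectivePair R := ⟨.of R (E i), A i, hEinj i, hE i, hA i⟩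
  let Y (i : I) : InjectivePair R :=
    ⟨.of R (E i), (B i).comap (e i).toLinearMap, hEinj i, hE i,
      ((hu i).isMeetIrreducible (hA (π i))).comap _⟩
  have hm' (i : I) : SameMonogenyClass R (X i).sub (Y i).sub := by
    obtain ⟨⟨f, hf⟩, g, hg⟩ := hm i
    exact ⟨⟨(d i).symm.toLinearMap ∘ₗ f, (d i).symm.injective.comp hf⟩,
      g ∘ₗ (d i).toLinearMap, hg.comp (d i).injective⟩
  obtain ⟨k⟩ := InjectivePair.nonempty_pi_sub_equiv (X := X) (Y := Y) π hA₀ hm' fun i =>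
    (hu i).comap_equiv (e i)
  exact ⟨k ≪≫ₗ .piCongrRight d⟩

end Families

end WeakKrullSchmidt

theorem direct_products_of_kernels_isomorphic_general {R : Type*} [Ring R] {I J : Type*}
    {E : I → Type*} {F : J → Type*} [∀ i, AddCommGroup (E i)] [∀ i, Module R (E i)]
    [∀ j, AddCommGroup (F j)] [∀ j, Module R (F j)]
    (hE : ∀ i, IsIndecomposableModule R (E i)) (hEinj : ∀ i, Module.Injective R (E i))
    (hF : ∀ j, IsIndecomposableModule R (F j)) (hFinj : ∀ j, Module.Injective R (F j))
    {A : ∀ i, Submodule R (E i)} {B : ∀ j, Submodule R (F j)}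
    (hA₀ : ∀ i, A i ≠ ⊥) (hA : ∀ i, WeakKrullSchmidt.IsMeetIrreducible (A i)) (σ τ : I ≃ J)
    (hm : ∀ i, SameMonogenyClass R (A i) (B (σ i)))
    (hu : ∀ i, WeakKrullSchmidt.SameUpperPart (A i) (B (τ i))) :
    Nonempty ((∀ i, A i) ≃ₗ[R] ∀ j, B j) := by
  have hu' (i : I) : WeakKrullSchmidt.SameUpperPart (A ((σ.trans τ.symm) i)) (B (σ i)) := by
    have h := hu (τ.symm (σ i))
    rwa [τ.apply_symm_apply] at h
  obtain ⟨e⟩ := WeakKrullSchmidt.nonempty_pi_equiv_of_perm hE hEinj (fun i => hF (σ i))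
    (fun i => hFinj (σ i)) hA₀ hA (σ.trans τ.symm) hm hu'
  exact ⟨e ≪≫ₗ .piCongrLeft R (fun j => B j) σ⟩

/-- Let `f i : E i → E' i` and `g j : F j → F' j` be non-injective homomorphisms between
indecomposable injective modules, with kernels `A i = ker (f i)` and `B j = ker (g j)`.
If there are bijections `σ, τ` matching the monogeny classes and the upper parts of the
kernels, then `∏ᵢ A i ≅ ∏ⱼ B j`. -/
theorem direct_products_of_kernels_isomorphic
    {R : Type*} [Ring R] {I J : Type*}
    (E E' : I → Type*) (F F' : J → Type*)
    [∀ i, AddCommGroup (E i)] [∀ i, Module R (E i)]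
    [∀ i, AddCommGroup (E' i)] [∀ i, Module R (E' i)]
    [∀ j, AddCommGroup (F j)] [∀ j, Module R (F j)]
    [∀ j, AddCommGroup (F' j)] [∀ j, Module R (F' j)]
    (hE : ∀ i, IsIndecomposableModule R (E i)) (hEinj : ∀ i, Module.Injective R (E i))
    (hE' : ∀ i, IsIndecomposableModule R (E' i)) (hE'inj : ∀ i, Module.Injective R (E' i))
    (hF : ∀ j, IsIndecomposableModule R (F j)) (hFinj : ∀ j, Module.Injective R (F j))
    (hF' : ∀ j, IsIndecomposableModule R (F' j)) (hF'inj : ∀ j, Module.Injective R (F' j))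
    (f : ∀ i, E i →ₗ[R] E' i) (g : ∀ j, F j →ₗ[R] F' j)
    (hf : ∀ i, ¬Function.Injective (f i)) (hg : ∀ j, ¬Function.Injective (g j))
    (σ τ : I ≃ J)
    (hm : ∀ i, SameMonogenyClass R (LinearMap.ker (f i)) (LinearMap.ker (g (σ i))))
    (hu : ∀ i, ∃ (φ : E i →ₗ[R] F (τ i)) (ψ : F (τ i) →ₗ[R] E i),
      Submodule.comap φ (LinearMap.ker (g (τ i))) = LinearMap.ker (f i) ∧
      Submodule.comap ψ (LinearMap.ker (f i)) = LinearMap.ker (g (τ i))) :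
    Nonempty (((i : I) → LinearMap.ker (f i)) ≃ₗ[R] ((j : J) → LinearMap.ker (g j))) := by
  exact direct_products_of_kernels_isomorphic_general hE hEinj hF hFinj
    (fun i h => hf i (LinearMap.ker_eq_bot.1 h))
    (fun i => (WeakKrullSchmidt.isMeetIrreducible_bot (hE' i) (hE'inj i)).comap (f i)) σ τ hm hu
end
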